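/- Let N ≥ 2 and let D be a nonempty convex set of Borel probability measures on [0,1]^N such that Δ_i > 0 for at least one i ∈ [N]. Let ℓ_1, ℓ_2, … be a semi-adversarial loss sequence constrained by D, and let (w_t) be the FTRL-CARL weights (with c = 2), where w_t may only depend on ℓ_1, …, ℓ_{t−1}. Then for every T > 8·(log N₀)/Δ₀², the expected worst-expert regret satisfies E[ max_{i∈[N]} ( Σ_{t=1}^T ⟨ℓ_t, w_t⟩ − Σ_{t=1}^T ℓ_t(i) ) ] ≤ √(2·T·log N₀) + 25·(log N)/Δ₀. -/

import Mathlib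

open MeasureTheory ProbabilityTheory

/-- The error function `erf(z) = (2/√π)∫_0^z e^{-u²} du`. -/
noncomputable def erf (z : ℝ) : ℝ :=
  2 / Real.sqrt Real.pi * ∫ u in (0 : ℝ)..z, Real.exp (-u ^ 2)

/-- `h_B(x) = x·√(2·log(1/x)) − √(π/2)·erf(√(log(1/x))) + x·(N−1)·√(π/2)` for `x ∈ (0,1]`,
with `h_B(0) = −√(π/2)`. -/
noncomputable def hB (N : ℕ) (x : ℝ) : ℝ :=
  if x = 0 then -Real.sqrt (Real.pi / 2)
  else x * Real.sqrt (2 * Real.log (1 / x))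
    - Real.sqrt (Real.pi / 2) * erf (Real.sqrt (Real.log (1 / x)))
    + x * ((N : ℝ) - 1) * Real.sqrt (Real.pi / 2)

noncomputable def HB {N : ℕ} (w : Fin N → ℝ) : ℝ := ∑ i, hB N (w i)

/-- FTRL-CARL with parameter `c > 0`:
`w_{t+1} ∈ argmin_{w ∈ Δ_N} { ⟨L_t, w⟩ − (√(t+1)/c)·H_B(w) }` with `L_t = Σ_{s=1}^t ℓ_s`. -/
def IsCarl (N : ℕ) (c : ℝ) (ℓ : ℕ → Fin N → ℝ) (w : ℕ → Fin N → ℝ) : Prop :=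
  ∀ t : ℕ, w (t + 1) ∈ stdSimplex ℝ (Fin N) ∧
    ∀ v ∈ stdSimplex ℝ (Fin N),
      (∑ i, (∑ s ∈ Finset.Icc 1 t, ℓ s i) * w (t + 1) i)
          - Real.sqrt ((t : ℝ) + 1) / c * HB (w (t + 1)) ≤
        (∑ i, (∑ s ∈ Finset.Icc 1 t, ℓ s i) * v i)
          - Real.sqrt ((t : ℝ) + 1) / c * HB v

/-- A semi-adversarial loss sequence constrained by `D`. -/
def IsSemiAdv {Ω : Type*} [MeasurableSpace Ω] (μ : Measure Ω) [IsFiniteMeasure μ]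
    {N : ℕ} (D : Set (Measure (Fin N → ℝ))) (ℓ : ℕ → Ω → Fin N → ℝ) : Prop :=
  (∀ t, Measurable (ℓ t)) ∧ (∀ t ω i, ℓ t ω i ∈ Set.Icc (0 : ℝ) 1) ∧
    ∀ t : ℕ, ∀ᵐ ω ∂μ,
      condDistrib (ℓ (t + 1)) (fun ω' (s : Fin t) => ℓ ((s : ℕ) + 1) ω') μ
        (fun s : Fin t => ℓ ((s : ℕ) + 1) ω) ∈ D

/-- The effective stochastic gap `Δ_i = inf_{λ∈D} max_{j∈[N]} E_{ℓ∼λ}[ℓ(i) − ℓ(j)]`. -/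
noncomputable def gap {N : ℕ} (D : Set (Measure (Fin N → ℝ))) (i : Fin N) : ℝ :=
  sInf ((fun lam => sSup (Set.range fun j : Fin N => ∫ v, (v i - v j) ∂lam)) '' D)

/-- The number of effective experts `N₀ = #{i : Δ_i = 0}`. -/
noncomputable def numEff {N : ℕ} (D : Set (Measure (Fin N → ℝ))) : ℕ :=
  {i : Fin N | gap D i = 0}.ncard

/-- The stochastic gap `Δ₀ = min{Δ_i : Δ_i > 0}`. -/
noncomputable def gap0 {N : ℕ} (D : Set (Measure (Fin N → ℝ))) : ℝ :=
  sInf (gap D '' {i : Fin N | 0 < gap D i})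


noncomputable def fG (s : ℝ) : ℝ := Real.exp (-s ^ 2 / 2)
noncomputable def EG (r : ℝ) : ℝ := ∫ x in (0:ℝ)..r, fG x

lemma fG_pos (s : ℝ) : 0 < fG s := Real.exp_pos _
lemma fG_cont : Continuous fG := by unfold fG; fun_prop
lemma fG_deriv (s : ℝ) : HasDerivAt fG (-(s * fG s)) s := by
  unfold fG
  have h : HasDerivAt (fun s : ℝ => -s ^ 2 / 2) (-s) s := by
    have := ((hasDerivAt_pow 2 s).neg).div_const 2
    refine HasDerivAt.congr_deriv this ?_
    push_cast
    ring
  refine HasDerivAt.congr_deriv h.exp ?_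
  ring
lemma EG_deriv (r : ℝ) : HasDerivAt EG (fG r) r :=
  intervalIntegral.integral_hasDerivAt_right (fG_cont.intervalIntegrable _ _)
    fG_cont.stronglyMeasurable.stronglyMeasurableAtFilter fG_cont.continuousAt
lemma EG_zero : EG 0 = 0 := by simp [EG]

lemma erf_eq (z : ℝ) : Real.sqrt (Real.pi / 2) * erf z = EG (Real.sqrt 2 * z) := by
  have h2 : (0:ℝ) < Real.sqrt 2 := by positivity
  have hp : (0:ℝ) < Real.sqrt Real.pi := Real.sqrt_pos.2 Real.pi_pos
  have hs : Real.sqrt 2 * Real.sqrt 2 = 2 := Real.mul_self_sqrt (by norm_num)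
  have key : EG (Real.sqrt 2 * z) = Real.sqrt 2 * ∫ u in (0 : ℝ)..z, Real.exp (-u ^ 2) := by
    unfold EG
    have := intervalIntegral.integral_comp_mul_left (a := 0) (b := z) fG (c := Real.sqrt 2) h2.ne'
    have e : ∀ u : ℝ, fG (Real.sqrt 2 * u) = Real.exp (-u^2) := by
      intro u; unfold fG; congr 1; rw [mul_pow, Real.sq_sqrt (by norm_num)]; ring
    simp only [e, mul_zero, smul_eq_mul] at this
    rw [this]; field_simp
  rw [key, erf, Real.sqrt_div Real.pi_pos.le]
  field_simp
  rw [Real.sq_sqrt (by norm_num)]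

lemma fG_integrable : Integrable fG := by
  have := integrable_exp_neg_mul_sq (b := 1/2) (by norm_num)
  convert this using 2 with x
  unfold fG; congr 1; ring

lemma fG_Ioi : ∫ x in Set.Ioi (0:ℝ), fG x = Real.sqrt (Real.pi / 2) := by
  have := integral_gaussian_Ioi (1/2)
  have e : ∀ x : ℝ, fG x = Real.exp (-(1/2) * x^2) := by intro u; unfold fG; congr 1; ring
  simp only [e]
  rw [this]
  rw [show Real.pi / (1/2) = Real.pi / 2 * 2 ^ 2 by ring, Real.sqrt_mul (by positivity), Real.sqrt_sq (by norm_num)]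
  ring

lemma EG_tail (r : ℝ) (hr : 0 ≤ r) :
    EG r + ∫ x in Set.Ioi r, fG x = Real.sqrt (Real.pi / 2) := by
  rw [← fG_Ioi, EG]
  exact intervalIntegral.integral_interval_add_Ioi fG_integrable.integrableOn fG_integrable.integrableOn

lemma EG_lt (r : ℝ) (hr : 0 ≤ r) : EG r < Real.sqrt (Real.pi / 2) := by
  rw [← EG_tail r hr]
  have : 0 < ∫ x in Set.Ioi r, fG x := by
    rw [setIntegral_pos_iff_support_of_nonneg_ae]
    · have : Function.support fG = Set.univ := by
        ext x; simp [(fG_pos x).ne']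
      rw [this]; simp
    · exact Filter.Eventually.of_forall fun x => (fG_pos x).le
    · exact fG_integrable.integrableOn
  linarith

lemma EG_tail_le (r : ℝ) (hr : 0 ≤ r) :
    Real.sqrt (Real.pi / 2) - EG r ≤ Real.sqrt (Real.pi / 2) * fG r := by
  rw [← EG_tail r hr]
  have h1 : ∫ x in Set.Ioi r, fG x = ∫ x in Set.Ioi (0:ℝ), fG (x + r) := by
    have hmp := measurePreserving_add_right (volume : Measure ℝ) r
    have := hmp.setIntegral_preimage_emb (measurableEmbedding_addRight r) fG (Set.Ioi r)
    rw [← this]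
    simp
  have h2 : ∫ x in Set.Ioi (0:ℝ), fG (x + r) ≤ ∫ x in Set.Ioi (0:ℝ), fG x * fG r := by
    apply setIntegral_mono_on
    · exact (fG_integrable.comp_add_right r).integrableOn
    · exact (fG_integrable.mul_const _).integrableOn
    · exact measurableSet_Ioi
    · intro x hx
      unfold fG
      rw [← Real.exp_add]
      apply Real.exp_le_exp.2
      have : 0 < x := hx
      nlinarith [mul_nonneg this.le hr]
  rw [integral_mul_const, fG_Ioi] at h2
  rw [EG_tail r hr]
  have := EG_tail r hr
  linarith

/-- tangent inequality -/
lemma tangent_aux (s r : ℝ) (hs : 0 ≤ s) (hr : 0 ≤ r) (hne : r ≠ s) :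
    r * fG r - EG r < s * fG s - EG s + s * (fG r - fG s) := by
  set j : ℝ → ℝ := fun r => s * fG s - EG s + s * (fG r - fG s) - (r * fG r - EG r) with hj
  have hd : ∀ r, HasDerivAt j (r * (r - s) * fG r) r := by
    intro r
    have h1 := (((fG_deriv r).sub_const (fG s)).const_mul s).const_add (s * fG s - EG s)
    have h2 := ((hasDerivAt_id r).mul (fG_deriv r)).sub (EG_deriv r)
    refine HasDerivAt.congr_deriv (h1.sub h2) ?_
    simp only [id]; ring
  have hc : Continuous j := by
    rw [continuous_iff_continuousAt]; exact fun x => (hd x).continuousAt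
  have hjs : j s = 0 := by simp [hj]
  have : 0 < j r := by
    rcases lt_or_gt_of_ne hne with h | h
    · have := strictAntiOn_of_deriv_neg (convex_Icc 0 s) hc.continuousOn (f := j) (by
        intro x hx
        rw [interior_Icc] at hx
        rw [(hd x).deriv]
        have := fG_pos x
        have h3 : x * (x - s) < 0 := by nlinarith [hx.1, hx.2]
        exact mul_neg_of_neg_of_pos h3 this)
      have := this ⟨hr, h.le⟩ ⟨hs, le_refl s⟩ h
      linarith
    · have := strictMonoOn_of_deriv_pos (convex_Ici s) hc.continuousOn (f := j) (by
        intro x hx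
        rw [interior_Ici] at hx
        have hx' : s < x := hx
        rw [(hd x).deriv]
        have := fG_pos x
        have h3 : 0 < x * (x - s) := by nlinarith
        exact mul_pos h3 this)
      have := this (Set.mem_Ici.2 le_rfl) (Set.mem_Ici.2 h.le) h
      linarith
  simp only [hj] at this
  linarith

lemma hB_fG (N : ℕ) (s : ℝ) (hs : 0 ≤ s) :
    hB N (fG s) = s * fG s - EG s + fG s * ((N:ℝ) - 1) * Real.sqrt (Real.pi / 2) := by
  unfold hB
  rw [if_neg (fG_pos s).ne', erf_eq]
  have : Real.log (1 / fG s) = s ^ 2 / 2 := by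
    rw [one_div, Real.log_inv, fG, Real.log_exp]; ring
  rw [this]
  have h1 : Real.sqrt (2 * (s^2/2)) = s := by
    rw [show 2 * (s^2/2) = s^2 by ring, Real.sqrt_sq hs]
  have h2 : Real.sqrt 2 * Real.sqrt (s^2/2) = s := by
    rw [← Real.sqrt_mul (by norm_num), h1]
  rw [h1, h2]; ring

lemma exists_fG (v : ℝ) (h0 : 0 < v) (h1 : v ≤ 1) : ∃ r, 0 ≤ r ∧ fG r = v := by
  refine ⟨Real.sqrt (2 * Real.log (1 / v)), Real.sqrt_nonneg _, ?_⟩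
  unfold fG
  rw [Real.sq_sqrt]
  · rw [one_div, Real.log_inv, show -(2 * -Real.log v) / 2 = Real.log v by ring, Real.exp_log h0]
  · have := Real.log_nonpos h0.le h1
    rw [one_div, Real.log_inv]; linarith

lemma hB_tangent (N : ℕ) (s : ℝ) (hs : 0 ≤ s) (v : ℝ) (h0 : 0 ≤ v) (h1 : v ≤ 1) (hne : v ≠ fG s) :
    hB N v < hB N (fG s) + (s + ((N:ℝ) - 1) * Real.sqrt (Real.pi / 2)) * (v - fG s) := by
  rw [hB_fG N s hs]
  rcases h0.eq_or_lt with h | h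
  · subst h
    have := EG_lt s hs
    simp only [hB, if_true]
    nlinarith
  · obtain ⟨r, hr, rfl⟩ := exists_fG v h h1
    rw [hB_fG N r hr]
    have := tangent_aux s r hs hr (fun e => hne (by rw [e]))
    nlinarith

lemma HB_tangent_le {N : ℕ} (s : Fin N → ℝ) (hs : ∀ i, 0 ≤ s i) (h1 : ∑ i, fG (s i) = 1)
    (v : Fin N → ℝ) (hv : v ∈ stdSimplex ℝ (Fin N)) :
    HB v ≤ HB (fun i => fG (s i)) + ∑ i, s i * (v i - fG (s i)) ∧
    (v ≠ (fun i => fG (s i)) →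
      HB v < HB (fun i => fG (s i)) + ∑ i, s i * (v i - fG (s i))) := by
  have hv1 : ∀ i, v i ≤ 1 := fun i => by
    rw [← hv.2]; exact Finset.single_le_sum (fun j _ => hv.1 j) (Finset.mem_univ i)
  have e : HB (fun i => fG (s i)) + ∑ i, s i * (v i - fG (s i)) =
      ∑ i, (hB N (fG (s i)) + (s i + ((N:ℝ) - 1) * Real.sqrt (Real.pi / 2)) * (v i - fG (s i))) := by
    have : ∑ i, ((N:ℝ) - 1) * Real.sqrt (Real.pi / 2) * (v i - fG (s i)) = 0 := by
      rw [← Finset.mul_sum, Finset.sum_sub_distrib, h1, hv.2]; ring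
    unfold HB
    simp only [add_mul, Finset.sum_add_distrib]
    rw [this]; ring
  have hle : ∀ i, hB N (v i) ≤ hB N (fG (s i)) +
      (s i + ((N:ℝ) - 1) * Real.sqrt (Real.pi / 2)) * (v i - fG (s i)) := by
    intro i
    by_cases h : v i = fG (s i)
    · rw [h]; simp
    · exact (hB_tangent N (s i) (hs i) (v i) (hv.1 i) (hv1 i) h).le
  rw [e]
  refine ⟨Finset.sum_le_sum fun i _ => hle i, fun hne => ?_⟩
  have : ∃ i, v i ≠ fG (s i) := by
    by_contra hcon
    push Not at hcon
    exact hne (funext hcon)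
  obtain ⟨i, hi⟩ := this
  exact Finset.sum_lt_sum (fun i _ => hle i)
    ⟨i, Finset.mem_univ i, hB_tangent N (s i) (hs i) (v i) (hv.1 i) (hv1 i) hi⟩

lemma HB_single {N : ℕ} (i : Fin N) : HB (Pi.single i (1:ℝ)) = 0 := by
  have h1 : hB N 1 = ((N:ℝ) - 1) * Real.sqrt (Real.pi / 2) := by
    have := hB_fG N 0 le_rfl
    simpa [fG, EG_zero] using this
  have h0 : hB N 0 = - Real.sqrt (Real.pi / 2) := by simp [hB]
  unfold HB
  rw [← Finset.add_sum_erase _ _ (Finset.mem_univ i)]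
  have : ∑ x ∈ Finset.univ.erase i, hB N ((Pi.single i (1:ℝ) : Fin N → ℝ) x) =
      ∑ x ∈ Finset.univ.erase i, (- Real.sqrt (Real.pi / 2)) := by
    apply Finset.sum_congr rfl
    intro x hx
    rw [Pi.single_eq_of_ne (Finset.ne_of_mem_erase hx), h0]
  rw [this, Pi.single_eq_same, h1, Finset.sum_const, Finset.card_erase_of_mem (Finset.mem_univ i)]
  have hN : 1 ≤ N := by have := i.2; omega
  simp [Nat.cast_sub hN]

lemma HB_le {N : ℕ} (s : Fin N → ℝ) (hs : ∀ i, 0 ≤ s i) (h1 : ∑ i, fG (s i) = 1) :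
    HB (fun i => fG (s i)) ≤ ∑ i, s i * fG (s i) := by
  unfold HB
  have : ∀ i, hB N (fG (s i)) ≤ s i * fG (s i) +
      (-Real.sqrt (Real.pi / 2) + N * Real.sqrt (Real.pi / 2) * fG (s i)) := by
    intro i
    rw [hB_fG N _ (hs i)]
    have := EG_tail_le (s i) (hs i)
    nlinarith
  refine (Finset.sum_le_sum fun i _ => this i).trans ?_
  rw [Finset.sum_add_distrib, Finset.sum_add_distrib, ← Finset.mul_sum, h1]
  simp

lemma exists_lam {N : ℕ} (hN : 1 ≤ N) (y : Fin N → ℝ) :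
    ∃ lam, (∀ i, lam ≤ y i) ∧ ∑ i, fG (y i - lam) = 1 := by
  haveI : Nonempty (Fin N) := ⟨⟨0, hN⟩⟩
  obtain ⟨m, hm⟩ := Finite.exists_min y
  have hlog : 0 ≤ Real.log N := Real.log_natCast_nonneg N
  set K := Real.sqrt (2 * Real.log N) with hK
  have hK0 : 0 ≤ K := Real.sqrt_nonneg _
  have hc : ContinuousOn (fun lam => ∑ i, fG (y i - lam)) (Set.Icc (y m - K) (y m)) := by
    apply Continuous.continuousOn
    apply continuous_finset_sum
    intro i _
    exact fG_cont.comp (by fun_prop)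
  have h := intermediate_value_Icc (by linarith) hc
  have h1 : (1:ℝ) ∈ Set.Icc (∑ i, fG (y i - (y m - K))) (∑ i, fG (y i - y m)) := by
    constructor
    · have : ∀ i, fG (y i - (y m - K)) ≤ 1 / N := by
        intro i
        unfold fG
        have hN' : (0:ℝ) < N := by exact_mod_cast hN
        rw [one_div, ← Real.exp_log (inv_pos.2 hN'), Real.log_inv]
        apply Real.exp_le_exp.2
        have h3 : K ≤ y i - (y m - K) := by linarith [hm i]
        have h4 : K ^ 2 = 2 * Real.log N := Real.sq_sqrt (by linarith)
        nlinarith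
      refine (Finset.sum_le_sum fun i _ => this i).trans ?_
      have hN' : (N:ℝ) ≠ 0 := by exact_mod_cast (by omega)
      simp [hN']
    · have : fG (y m - y m) = 1 := by simp [fG]
      rw [← this]
      exact Finset.single_le_sum (f := fun i => fG (y i - y m)) (fun j _ => (fG_pos _).le) (Finset.mem_univ m)
  obtain ⟨lam, hl, he⟩ := h h1
  exact ⟨lam, fun i => hl.2.trans (hm i), he⟩

lemma qG_lip (s r : ℝ) : r * fG r ≤ s * fG s + |r - s| := by
  have hd : ∀ x ∈ (Set.univ : Set ℝ), HasDerivWithinAt (fun x => x * fG x) ((1 - x^2) * fG x) Set.univ x := by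
    intro x _
    apply HasDerivAt.hasDerivWithinAt
    refine HasDerivAt.congr_deriv ((hasDerivAt_id x).mul (fG_deriv x)) ?_
    simp only [id]; ring
  have := Convex.norm_image_sub_le_of_norm_hasDerivWithin_le (C := 1) hd (by
    intro x _
    rw [Real.norm_eq_abs, abs_mul, abs_of_pos (fG_pos x)]
    unfold fG
    have h1 : x^2/2 + 1 + (x^2/2)^2/2 ≤ Real.exp (x^2/2) := by
      have := Real.quadratic_le_exp_of_nonneg (x := x^2/2) (by positivity)
      linarith
    have h2 : |1 - x^2| ≤ Real.exp (x^2/2) := by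
      rw [abs_le]
      constructor
      · nlinarith [sq_nonneg (x^2/2 - 1)]
      · nlinarith [sq_nonneg x]
    rw [show -x^2/2 = -(x^2/2) by ring, Real.exp_neg, ← div_eq_mul_inv, div_le_one (Real.exp_pos _)]
    exact h2) convex_univ (Set.mem_univ s) (Set.mem_univ r)
  rw [Real.norm_eq_abs, Real.norm_eq_abs] at this
  have := (le_abs_self _).trans this
  linarith

/-- mean value representation -/
lemma fG_mvt (s r : ℝ) (hs : 0 ≤ s) (hr : 0 ≤ r) :
    ∃ q, 0 ≤ q ∧ q ≤ s * fG s + |r - s| ∧ fG s - fG r = q * (r - s) := by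
  have hd : ∀ x, HasDerivAt fG (-(x * fG x)) x := fG_deriv
  rcases lt_trichotomy s r with h | h | h
  · obtain ⟨c, hc, e⟩ := exists_hasDerivAt_eq_slope fG _ h fG_cont.continuousOn (fun x _ => hd x)
    refine ⟨c * fG c, mul_nonneg (by linarith [hc.1]) (fG_pos c).le, (qG_lip s c).trans ?_, ?_⟩
    · have : |c - s| ≤ |r - s| := by
        rw [abs_of_pos (by linarith [hc.1]), abs_of_pos (by linarith)]; linarith [hc.2]
      linarith
    · have : r - s ≠ 0 := by linarith
      field_simp at e
      linarith
  · subst h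
    exact ⟨s * fG s, mul_nonneg hs (fG_pos s).le, by simp, by simp⟩
  · obtain ⟨c, hc, e⟩ := exists_hasDerivAt_eq_slope fG _ h fG_cont.continuousOn (fun x _ => hd x)
    refine ⟨c * fG c, mul_nonneg (by linarith [hc.1]) (fG_pos c).le, (qG_lip s c).trans ?_, ?_⟩
    · have : |c - s| ≤ |r - s| := by
        rw [abs_of_neg (by linarith [hc.2]), abs_of_neg (by linarith)]; linarith [hc.1]
      linarith
    · have : s - r ≠ 0 := by linarith
      field_simp at e
      linarith

lemma fG_lt (s r : ℝ) (hs : 0 ≤ s) (h : s < r) : fG r < fG s := by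
  unfold fG; apply Real.exp_lt_exp.2; nlinarith

/-- one small step of the path -/
lemma step_bound {N : ℕ} (hN : 1 ≤ N) (s r d : Fin N → ℝ) (hs : ∀ i, 0 ≤ s i) (hr : ∀ i, 0 ≤ r i)
    (h1 : ∑ i, fG (s i) = 1) (h2 : ∑ i, fG (r i) = 1) (E : ℝ) (hd0 : ∀ i, 0 ≤ d i)
    (hdE : ∀ i, d i ≤ E) (a : ℝ) (hsr : ∀ i, r i - s i = d i - a) :
    ∑ i, d i * (fG (s i) - fG (r i)) ≤ E ^ 2 / 4 * (∑ i, s i * fG (s i) + N * E) := by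
  haveI : Nonempty (Fin N) := ⟨⟨0, hN⟩⟩
  have ha0 : 0 ≤ a := by
    by_contra h
    have : ∑ i, fG (r i) < ∑ i, fG (s i) := by
      apply Finset.sum_lt_sum_of_nonempty Finset.univ_nonempty
      intro i _
      exact fG_lt _ _ (hs i) (by linarith [hsr i, hd0 i])
    linarith
  have haE : a ≤ E := by
    by_contra h
    have : ∑ i, fG (s i) < ∑ i, fG (r i) := by
      apply Finset.sum_lt_sum_of_nonempty Finset.univ_nonempty
      intro i _
      exact fG_lt _ _ (hr i) (by linarith [hsr i, hdE i])
    linarith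
  choose q hq0 hq1 hq2 using fun i => fG_mvt (s i) (r i) (hs i) (hr i)
  have hz : ∑ i, q i * (d i - a) = 0 := by
    have : ∑ i, q i * (d i - a) = ∑ i, (fG (s i) - fG (r i)) :=
      Finset.sum_congr rfl fun i _ => by rw [hq2, hsr]
    rw [this, Finset.sum_sub_distrib, h1, h2]; ring
  have e : ∑ i, d i * (fG (s i) - fG (r i)) = ∑ i, q i * (d i - a)^2 := by
    have : ∑ i, d i * (fG (s i) - fG (r i)) = ∑ i, (q i * (d i - a)^2 + a * (q i * (d i - a))) :=
      Finset.sum_congr rfl fun i _ => by rw [hq2, hsr]; ring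
    rw [this, Finset.sum_add_distrib, ← Finset.mul_sum, hz]; ring
  have l1 : ∑ i, q i * (d i - a)^2 ≤ ∑ i, (a * (E - a) * q i + (E - 2 * a) * (q i * (d i - a))) := by
    apply Finset.sum_le_sum
    intro i _
    have : 0 ≤ q i * (d i * (E - d i)) :=
      mul_nonneg (hq0 i) (mul_nonneg (hd0 i) (by linarith [hdE i]))
    nlinarith
  rw [Finset.sum_add_distrib, ← Finset.mul_sum, ← Finset.mul_sum, hz] at l1
  have l2 : ∑ i, q i ≤ ∑ i, s i * fG (s i) + N * E := by
    have : ∑ i, q i ≤ ∑ i, (s i * fG (s i) + E) := by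
      apply Finset.sum_le_sum
      intro i _
      have : |r i - s i| ≤ E := by
        rw [hsr, abs_le]; constructor <;> linarith [hd0 i, hdE i]
      linarith [hq1 i]
    rw [Finset.sum_add_distrib] at this
    simpa using this
  have l3 : 0 ≤ ∑ i, q i := Finset.sum_nonneg fun i _ => hq0 i
  have l4 : a * (E - a) ≤ E^2/4 := by nlinarith [sq_nonneg (E - 2 * a)]
  rw [e]
  have : a * (E - a) * ∑ i, q i ≤ E^2/4 * ∑ i, q i := mul_le_mul_of_nonneg_right l4 l3
  have : E^2/4 * ∑ i, q i ≤ E^2/4 * (∑ i, s i * fG (s i) + N * E) :=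
    mul_le_mul_of_nonneg_left l2 (by positivity)
  linarith

lemma path_lemma (g G : ℝ → ℝ) (K C : ℝ) (hC : 0 ≤ C)
    (h1 : ∀ x y, 0 ≤ x → x ≤ y → y ≤ 1 → G y * (y - x) ≤ g y - g x)
    (h2 : ∀ x y, 0 ≤ x → x < y → y ≤ 1 → G x - G y ≤ (y - x) * (K + C * (y - x))) :
    g 0 + G 0 - g 1 ≤ K / 2 := by
  have key : ∀ n : ℕ, 0 < n → g 0 + G 0 - g 1 ≤ K / 2 + (K / 2 + C) * (1 / (n:ℝ)) := by
    intro n hn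
    have hn' : (0:ℝ) < n := by exact_mod_cast hn
    have A : ∀ k : ℕ, k ≤ n → G 0 - G (k / n) ≤ k / n * (K + C / n) := by
      intro k
      induction k with
      | zero => intro _; simp
      | succ k ih =>
        intro hk
        have hk' : ((k:ℝ) + 1) ≤ n := by exact_mod_cast hk
        have i1 := ih (by omega)
        have i2 := h2 (k / n) ((k + 1 : ℕ) / n) (by positivity) (by push_cast; gcongr; linarith)
          (by push_cast; rw [div_le_one hn']; exact hk')
        have e : (((k + 1 : ℕ):ℝ) / n - k / n) = 1 / n := by push_cast; field_simp; ring
        rw [e] at i2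
        have e3 : ((k + 1 : ℕ):ℝ) / n * (K + C / n) = k / n * (K + C / n) + 1 / n * (K + C * (1 / n)) := by
          push_cast; ring
        rw [e3]; linarith
    have B : ∀ k : ℕ, k ≤ n → g 0 + k / n * G 0 - g (k / n) ≤ (K + C / n) * (k * (k + 1) / (2 * n ^ 2)) := by
      intro k
      induction k with
      | zero => intro _; simp
      | succ k ih =>
        intro hk
        have hk' : ((k:ℝ) + 1) ≤ n := by exact_mod_cast hk
        have i1 := ih (by omega)
        have i2 := h1 (k / n) ((k + 1 : ℕ) / n) (by positivity) (by push_cast; gcongr; linarith)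
          (by push_cast; rw [div_le_one hn']; exact hk')
        have i3 := A (k + 1) hk
        have e : (((k + 1 : ℕ):ℝ) / n - k / n) = 1 / n := by push_cast; field_simp; ring
        rw [e] at i2
        have i4 := mul_le_mul_of_nonneg_right i3 (show (0:ℝ) ≤ 1 / n by positivity)
        have e3 : (K + C / n) * (((k + 1 : ℕ):ℝ) * (((k + 1 : ℕ):ℝ) + 1) / (2 * n ^ 2)) =
          (K + C / n) * ((k:ℝ) * (k + 1) / (2 * n ^ 2)) + (((k + 1 : ℕ):ℝ) / n * (K + C / n)) * (1 / n) := by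
          push_cast; field_simp; ring
        have e4 : ((k + 1 : ℕ):ℝ) / n * G 0 = k / n * G 0 + G 0 * (1 / n) := by
          push_cast; ring
        rw [e3, e4]; linarith
    have := B n le_rfl
    rw [div_self hn'.ne'] at this
    have e : (K + C / n) * (n * (n + 1) / (2 * (n:ℝ) ^ 2)) =
        K / 2 + (K / 2 + C) * (1 / n) - C / (2 * n) * (1 - 1 / n) := by
      field_simp; ring
    have : 0 ≤ C / (2 * n) * (1 - 1 / n) := by
      apply mul_nonneg (by positivity)
      have : 1 / (n:ℝ) ≤ 1 := by
        rw [div_le_one hn']; exact_mod_cast hn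
      linarith
    linarith
  have lim : Filter.Tendsto (fun n : ℕ => K / 2 + (K / 2 + C) * (1 / (n:ℝ))) Filter.atTop (nhds (K / 2)) := by
    have := (tendsto_one_div_atTop_nhds_zero_nat (𝕜 := ℝ)).const_mul (K / 2 + C)
    simpa using this.const_add (K / 2)
  exact ge_of_tendsto lim (Filter.eventually_atTop.2 ⟨1, fun n hn => key n hn⟩)

lemma fG_mem {N : ℕ} (s : Fin N → ℝ) (h1 : ∑ i, fG (s i) = 1) :
    (fun i => fG (s i)) ∈ stdSimplex ℝ (Fin N) := ⟨fun i => (fG_pos _).le, h1⟩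

lemma opt_le {N : ℕ} (y : Fin N → ℝ) (lam : ℝ) (hl : ∀ i, lam ≤ y i)
    (h1 : ∑ i, fG (y i - lam) = 1) (v : Fin N → ℝ) (hv : v ∈ stdSimplex ℝ (Fin N)) :
    ∑ i, y i * fG (y i - lam) - HB (fun i => fG (y i - lam)) ≤ ∑ i, y i * v i - HB v ∧
    (v ≠ (fun i => fG (y i - lam)) →
      ∑ i, y i * fG (y i - lam) - HB (fun i => fG (y i - lam)) < ∑ i, y i * v i - HB v) := by
  have h := HB_tangent_le (fun i => y i - lam) (fun i => by linarith [hl i]) h1 v hv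
  have e : ∑ i, (y i - lam) * (v i - fG (y i - lam)) =
      ∑ i, y i * v i - ∑ i, y i * fG (y i - lam) := by
    have : ∀ i, (y i - lam) * (v i - fG (y i - lam)) =
        y i * v i - y i * fG (y i - lam) - lam * (v i - fG (y i - lam)) := fun i => by ring
    simp only [this, Finset.sum_sub_distrib, ← Finset.mul_sum, hv.2, h1]
    ring
  simp only [e] at h
  exact ⟨by linarith [h.1], fun hne => by linarith [h.2 hne]⟩

lemma stab {N : ℕ} (hN : 1 ≤ N) (τ : ℝ) (hτ : 0 < τ) (L l w : Fin N → ℝ)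
    (hl : ∀ i, l i ∈ Set.Icc (0:ℝ) 1) (hw : w ∈ stdSimplex ℝ (Fin N))
    (hmin : ∀ v ∈ stdSimplex ℝ (Fin N),
      ∑ i, L i * w i - τ / 2 * HB w ≤ ∑ i, L i * v i - τ / 2 * HB v)
    (R : ℝ)
    (hR : ∀ θ lam : ℝ, 0 ≤ θ → θ ≤ 1 → (∀ i, lam ≤ 2 / τ * (L i + θ * l i)) →
      ∑ i, fG (2 / τ * (L i + θ * l i) - lam) = 1 →
      ∑ i, (2 / τ * (L i + θ * l i) - lam) * fG (2 / τ * (L i + θ * l i) - lam) ≤ R) :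
    HB w ≤ R ∧ ∀ v ∈ stdSimplex ℝ (Fin N),
      ∑ i, L i * w i - τ / 2 * HB w + ∑ i, l i * w i ≤
        ∑ i, (L i + l i) * v i - τ / 2 * HB v + R / (4 * τ) := by
  have hη : 0 < 2 / τ := by positivity
  set η := 2 / τ with hηd
  choose lam hl1 hl2 using fun θ : ℝ => exists_lam hN (fun i => η * (L i + θ * l i))
  set W : ℝ → Fin N → ℝ := fun θ i => fG (η * (L i + θ * l i) - lam θ) with hW
  have hWm : ∀ θ, W θ ∈ stdSimplex ℝ (Fin N) := fun θ => fG_mem _ (hl2 θ)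
  have hopt : ∀ θ, ∀ v ∈ stdSimplex ℝ (Fin N), _ := fun θ v hv =>
    opt_le (fun i => η * (L i + θ * l i)) (lam θ) (hl1 θ) (hl2 θ) v hv
  have hw0 : w = W 0 := by
    by_contra hne
    have a1 := (hopt 0 w hw).2 hne
    have a2 := hmin (W 0) (hWm 0)
    have a3 := mul_le_mul_of_nonneg_left a2 hη.le
    have e1 : ∀ v : Fin N → ℝ, η * (∑ i, L i * v i - τ / 2 * HB v) =
        ∑ i, η * (L i + 0 * l i) * v i - HB v := by
      intro v
      rw [mul_sub, ← mul_assoc, hηd, Finset.mul_sum]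
      congr 1
      · apply Finset.sum_congr rfl; intro i _; ring
      · field_simp
    rw [e1, e1] at a3
    exact absurd a1 (not_lt.2 a3)
  have hHB : HB w ≤ R := by
    rw [hw0]
    exact (HB_le (fun i => η * (L i + 0 * l i) - lam 0) (fun i => sub_nonneg.2 (hl1 0 i)) (hl2 0)).trans
      (hR 0 (lam 0) le_rfl zero_le_one (hl1 0) (hl2 0))
  refine ⟨hHB, fun v hv => ?_⟩
  have P := path_lemma (fun θ => ∑ i, η * (L i + θ * l i) * W θ i - HB (W θ))
    (fun θ => η * ∑ i, l i * W θ i) (η ^ 2 / 4 * R) (η ^ 3 / 4 * N) (by positivity)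
    (by
      intro x y hx hxy hy
      have := (hopt x (W y) (hWm y)).1
      have e : ∑ i, η * (L i + y * l i) * W y i =
          ∑ i, η * (L i + x * l i) * W y i + (η * ∑ i, l i * W y i) * (y - x) := by
        rw [Finset.mul_sum, Finset.sum_mul, ← Finset.sum_add_distrib]
        apply Finset.sum_congr rfl; intro i _; ring
      rw [e]
      linarith)
    (by
      intro x y hx hxy hy
      have hyx : 0 < y - x := by linarith
      have S := step_bound hN (fun i => η * (L i + x * l i) - lam x) (fun i => η * (L i + y * l i) - lam y)
        (fun i => η * (y - x) * l i) (fun i => sub_nonneg.2 (hl1 x i)) (fun i => sub_nonneg.2 (hl1 y i))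
        (hl2 x) (hl2 y) (η * (y - x)) (fun i => mul_nonneg (by positivity) (hl i).1)
        (fun i => mul_le_of_le_one_right (by positivity) (hl i).2) (lam y - lam x)
        (fun i => by ring)
      have r := hR x (lam x) hx (by linarith) (hl1 x) (hl2 x)
      have e : ∑ i, η * (y - x) * l i * (W x i - W y i) =
          (y - x) * (η * ∑ i, l i * W x i - η * ∑ i, l i * W y i) := by
        rw [Finset.mul_sum, Finset.mul_sum, ← Finset.sum_sub_distrib, Finset.mul_sum]
        apply Finset.sum_congr rfl; intro i _; ring
      simp only [hW] at e
      rw [e] at S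
      have S2 : (y - x) * (η * ∑ i, l i * W x i - η * ∑ i, l i * W y i) ≤
          (y - x) * ((y - x) * (η ^ 2 / 4 * R + η ^ 3 / 4 * N * (y - x))) := by
        refine S.trans ?_
        have : (η * (y - x)) ^ 2 / 4 * (∑ i, (η * (L i + x * l i) - lam x) * fG (η * (L i + x * l i) - lam x) + N * (η * (y - x))) ≤
          (η * (y - x)) ^ 2 / 4 * (R + N * (η * (y - x))) := by gcongr
        refine this.trans (le_of_eq ?_)
        ring
      exact le_of_mul_le_mul_left S2 hyx)
  have Q := (hopt 1 v hv).1
  rw [← hw0] at P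
  have P2 : η * (∑ i, L i * w i + ∑ i, l i * w i) - HB w ≤
      η * (∑ i, (L i + l i) * v i) - HB v + η ^ 2 / 8 * R := by
    have e1 : ∑ i, η * (L i + 0 * l i) * w i = η * ∑ i, L i * w i := by
      rw [Finset.mul_sum]; apply Finset.sum_congr rfl; intro i _; ring
    have e2 : ∑ i, η * (L i + 1 * l i) * v i = η * ∑ i, (L i + l i) * v i := by
      rw [Finset.mul_sum]; apply Finset.sum_congr rfl; intro i _; ring
    rw [e2] at Q
    rw [e1] at P
    simp only [hW] at P
    linarith
  have P3 := mul_le_mul_of_nonneg_left P2 (show 0 ≤ τ / 2 by positivity)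
  have e3 : τ / 2 * η = 1 := by rw [hηd]; field_simp
  have e4 : τ / 2 * (η * (∑ i, (L i + l i) * v i) - HB v + η ^ 2 / 8 * R) =
      (∑ i, (L i + l i) * v i) - τ / 2 * HB v + R / (4 * τ) := by
    rw [hηd]; field_simp; ring
  have e5 : τ / 2 * (η * (∑ i, L i * w i + ∑ i, l i * w i) - HB w) =
      ∑ i, L i * w i - τ / 2 * HB w + ∑ i, l i * w i := by
    rw [hηd]; field_simp; ring
  rw [e4, e5] at P3
  exact P3

/-- entropy bound on a subset -/
lemma ent_bound {N : ℕ} (s : Fin N → ℝ) (hs : ∀ i, 0 ≤ s i) (h1 : ∑ i, fG (s i) = 1)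
    (I : Finset (Fin N)) :
    ∑ i ∈ I, s i * fG (s i) ≤ Real.sqrt (2 * Real.log (I.card) + 2 * ∑ i ∈ Iᶜ, fG (s i)) := by
  rcases I.eq_empty_or_nonempty with rfl | hI
  · simp
  have hc : (0:ℝ) < I.card := by exact_mod_cast hI.card_pos
  have hlog : 0 ≤ Real.log (I.card) := Real.log_natCast_nonneg _
  have hp : ∑ i ∈ I, fG (s i) + ∑ i ∈ Iᶜ, fG (s i) = 1 := by
    rw [← h1]; exact Finset.sum_add_sum_compl I _
  have heps : 0 ≤ ∑ i ∈ Iᶜ, fG (s i) := Finset.sum_nonneg fun i _ => (fG_pos _).le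
  have hent : ∑ i ∈ I, s i ^ 2 * fG (s i) ≤ 2 * Real.log (I.card) + 2 * ∑ i ∈ Iᶜ, fG (s i) := by
    have : ∀ i ∈ I, s i ^ 2 * fG (s i) ≤ 2 * Real.log (I.card) * fG (s i) + 2 * (1 / I.card - fG (s i)) := by
      intro i _
      have hf := fG_pos (s i)
      have h2 : Real.log (1 / (I.card * fG (s i))) ≤ 1 / (I.card * fG (s i)) - 1 :=
        Real.log_le_sub_one_of_pos (by positivity)
      have h3 : Real.log (1 / (I.card * fG (s i))) = - Real.log I.card + s i ^ 2 / 2 := by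
        rw [one_div, Real.log_inv, Real.log_mul hc.ne' hf.ne', fG, Real.log_exp]; ring
      rw [h3] at h2
      have h4 := mul_le_mul_of_nonneg_right h2 hf.le
      have h5 : (1 / (I.card * fG (s i)) - 1) * fG (s i) = 1 / I.card - fG (s i) := by
        field_simp
      rw [h5] at h4
      linarith
    refine (Finset.sum_le_sum this).trans ?_
    rw [Finset.sum_add_distrib, ← Finset.mul_sum, ← Finset.mul_sum, Finset.sum_sub_distrib]
    simp only [Finset.sum_const, nsmul_eq_mul]
    rw [mul_one_div_cancel hc.ne']
    have : ∑ i ∈ I, fG (s i) ≤ 1 := by linarith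
    nlinarith
  apply Real.le_sqrt_of_sq_le
  have cs := Finset.sum_mul_sq_le_sq_mul_sq I (fun i => Real.sqrt (fG (s i))) (fun i => s i * Real.sqrt (fG (s i)))
  have e1 : ∑ i ∈ I, Real.sqrt (fG (s i)) * (s i * Real.sqrt (fG (s i))) = ∑ i ∈ I, s i * fG (s i) := by
    apply Finset.sum_congr rfl; intro i _
    have := Real.mul_self_sqrt (fG_pos (s i)).le
    linear_combination s i * this
  have e2 : ∑ i ∈ I, Real.sqrt (fG (s i)) ^ 2 = ∑ i ∈ I, fG (s i) := by
    apply Finset.sum_congr rfl; intro i _; exact Real.sq_sqrt (fG_pos (s i)).le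
  have e3 : ∑ i ∈ I, (s i * Real.sqrt (fG (s i))) ^ 2 = ∑ i ∈ I, s i ^ 2 * fG (s i) := by
    apply Finset.sum_congr rfl; intro i _; rw [mul_pow, Real.sq_sqrt (fG_pos (s i)).le]
  rw [e1, e2, e3] at cs
  have hnn : 0 ≤ ∑ i ∈ I, s i ^ 2 * fG (s i) := Finset.sum_nonneg fun i _ => mul_nonneg (sq_nonneg _) (fG_pos _).le
  nlinarith

lemma R_le_logN {N : ℕ} (s : Fin N → ℝ) (hs : ∀ i, 0 ≤ s i) (h1 : ∑ i, fG (s i) = 1) :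
    ∑ i, s i * fG (s i) ≤ Real.sqrt (2 * Real.log N) := by
  simpa using ent_bound s hs h1 Finset.univ

lemma R_le_I {N : ℕ} (s : Fin N → ℝ) (hs : ∀ i, 0 ≤ s i) (h1 : ∑ i, fG (s i) = 1)
    (I : Finset (Fin N)) :
    ∑ i, s i * fG (s i) ≤ Real.sqrt (2 * Real.log (I.card)) + 3 * ∑ i ∈ Iᶜ, Real.exp (-(s i)^2/4) := by
  have h2 := ent_bound s hs h1 I
  have hlog : 0 ≤ Real.log (I.card) := Real.log_natCast_nonneg _
  have hs2 : Real.sqrt 2 ≤ 3 / 2 := by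
    rw [Real.sqrt_le_left (by norm_num)]; norm_num
  have hsq : ∀ i, fG (s i) = Real.exp (-(s i)^2/4) ^ 2 := by
    intro i; rw [fG, ← Real.exp_nat_mul]; congr 1; push_cast; ring
  have hE : 0 ≤ ∑ i ∈ Iᶜ, Real.exp (-(s i)^2/4) := Finset.sum_nonneg fun i _ => (Real.exp_pos _).le
  have h3 : ∑ i ∈ Iᶜ, fG (s i) ≤ (∑ i ∈ Iᶜ, Real.exp (-(s i)^2/4)) ^ 2 := by
    simp only [hsq]
    exact Finset.sum_sq_le_sq_sum_of_nonneg (fun i _ => (Real.exp_pos _).le)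
  have h4 : Real.sqrt (2 * Real.log (I.card) + 2 * ∑ i ∈ Iᶜ, fG (s i)) ≤
      Real.sqrt (2 * Real.log (I.card)) + 3 / 2 * ∑ i ∈ Iᶜ, Real.exp (-(s i)^2/4) := by
    rw [Real.sqrt_le_left (by positivity)]
    have := Real.sq_sqrt (show 0 ≤ 2 * Real.log (I.card) by positivity)
    have := mul_nonneg (Real.sqrt_nonneg (2 * Real.log (I.card))) hE
    nlinarith
  have h5 : ∑ i ∈ Iᶜ, s i * fG (s i) ≤ 3 / 2 * ∑ i ∈ Iᶜ, Real.exp (-(s i)^2/4) := by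
    rw [Finset.mul_sum]
    apply Finset.sum_le_sum
    intro i _
    rw [hsq, sq, ← mul_assoc]
    apply mul_le_mul_of_nonneg_right _ (Real.exp_pos _).le
    rw [show -(s i)^2/4 = -((s i)^2/4) by ring, Real.exp_neg, ← div_eq_mul_inv, div_le_iff₀ (Real.exp_pos _)]
    have := Real.add_one_le_exp ((s i)^2/4)
    nlinarith [sq_nonneg (s i - 4/3)]
  rw [← Finset.sum_add_sum_compl I]
  linarith

lemma pathwise {N : ℕ} (hN : 1 ≤ N) (ℓ w : ℕ → Fin N → ℝ) (hℓ : ∀ t i, ℓ t i ∈ Set.Icc (0:ℝ) 1)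
    (hc : IsCarl N 2 ℓ w) (ρ : ℕ → ℝ) (hρ0 : ∀ t, 0 ≤ ρ t)
    (hρ : ∀ k : ℕ, ∀ θ lam : ℝ, 0 ≤ θ → θ ≤ 1 →
      (∀ i, lam ≤ 2 / Real.sqrt ((k:ℝ) + 1) * ((∑ s ∈ Finset.Icc 1 k, ℓ s i) + θ * ℓ (k+1) i)) →
      ∑ i, fG (2 / Real.sqrt ((k:ℝ) + 1) * ((∑ s ∈ Finset.Icc 1 k, ℓ s i) + θ * ℓ (k+1) i) - lam) = 1 →
      ∑ i, (2 / Real.sqrt ((k:ℝ) + 1) * ((∑ s ∈ Finset.Icc 1 k, ℓ s i) + θ * ℓ (k+1) i) - lam) *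
        fG (2 / Real.sqrt ((k:ℝ) + 1) * ((∑ s ∈ Finset.Icc 1 k, ℓ s i) + θ * ℓ (k+1) i) - lam) ≤ ρ (k + 1))
    (T : ℕ) : ∀ v ∈ stdSimplex ℝ (Fin N),
      ∑ t ∈ Finset.Icc 1 T, ∑ j, ℓ t j * w t j ≤
        ∑ i, (∑ s ∈ Finset.Icc 1 T, ℓ s i) * v i - Real.sqrt T / 2 * HB v +
        ∑ t ∈ Finset.Icc 1 T, (Real.sqrt t - Real.sqrt ((t:ℝ) - 1)) * ρ t := by
  induction T with
  | zero => intro v hv; simp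
  | succ k ih =>
    intro v hv
    have hk : (0:ℝ) < (k:ℝ) + 1 := by positivity
    have hτ : 0 < Real.sqrt ((k:ℝ) + 1) := Real.sqrt_pos.2 hk
    obtain ⟨hH, S⟩ := stab hN (Real.sqrt ((k:ℝ) + 1)) hτ (fun i => ∑ s ∈ Finset.Icc 1 k, ℓ s i)
      (ℓ (k+1)) (w (k+1)) (hℓ (k+1)) (hc k).1 (hc k).2 (ρ (k+1)) (hρ k)
    have S1 := S v hv
    have I1 := ih (w (k+1)) (hc k).1
    rw [Finset.sum_Icc_succ_top (by omega), Finset.sum_Icc_succ_top (by omega)]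
    have e : ∑ i, (∑ s ∈ Finset.Icc 1 (k+1), ℓ s i) * v i =
        ∑ i, ((∑ s ∈ Finset.Icc 1 k, ℓ s i) + ℓ (k+1) i) * v i := by
      apply Finset.sum_congr rfl; intro i _; rw [Finset.sum_Icc_succ_top (by omega)]
    rw [e]
    push_cast
    rw [add_sub_cancel_right]
    set a := Real.sqrt ((k:ℝ) + 1) with ha
    set b := Real.sqrt (k:ℝ) with hb
    have ha2 : a ^ 2 = k + 1 := Real.sq_sqrt hk.le
    have hb2 : b ^ 2 = k := Real.sq_sqrt (by positivity)
    have hb0 : 0 ≤ b := Real.sqrt_nonneg _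
    have hab : b ≤ a := Real.sqrt_le_sqrt (by linarith)
    have h4 : 1 / (4 * a) ≤ (a - b) / 2 := by
      rw [div_le_div_iff₀ (by positivity) (by norm_num)]
      nlinarith
    have h5 : ρ (k+1) / (4 * a) ≤ (a - b) / 2 * ρ (k+1) := by
      have := mul_le_mul_of_nonneg_right h4 (hρ0 (k+1))
      rw [one_div_mul_eq_div] at this
      exact this
    have h6 : (a - b) / 2 * HB (w (k+1)) ≤ (a - b) / 2 * ρ (k+1) :=
      mul_le_mul_of_nonneg_left hH (by linarith)
    linarith

lemma coord_bound {N : ℕ} (L l : Fin N → ℝ) (hl : ∀ i, l i ∈ Set.Icc (0:ℝ) 1)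
    (τ β θ lam : ℝ) (hτ : 0 < τ) (hβ : 0 ≤ β) (h0 : 0 ≤ θ) (h1 : θ ≤ 1)
    (hlam : ∀ i, lam ≤ 2 / τ * (L i + θ * l i)) (u : Fin N → ℝ) (hu : u ∈ stdSimplex ℝ (Fin N))
    (i : Fin N) :
    Real.exp (-(2 / τ * (L i + θ * l i) - lam) ^ 2 / 4) ≤
      Real.exp (-(2 * β) * (L i - ∑ j, u j * L j)) * Real.exp (2 * β + β ^ 2 * τ ^ 2) := by
  rw [← Real.exp_add]
  apply Real.exp_le_exp.2
  set X := L i - ∑ j, u j * L j with hX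
  have e1 : lam ≤ 2 / τ * (∑ j, u j * L j + θ * ∑ j, u j * l j) := by
    have : lam = ∑ j, u j * lam := by rw [← Finset.sum_mul, hu.2, one_mul]
    rw [this]
    calc ∑ j, u j * lam ≤ ∑ j, u j * (2 / τ * (L j + θ * l j)) :=
          Finset.sum_le_sum fun j _ => mul_le_mul_of_nonneg_left (hlam j) (hu.1 j)
      _ = _ := by
          rw [Finset.mul_sum, ← Finset.sum_add_distrib, Finset.mul_sum]
          apply Finset.sum_congr rfl; intro j _; ring
  have e2 : ∑ j, u j * l j ≤ 1 := by
    rw [← hu.2]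
    exact Finset.sum_le_sum fun j _ => mul_le_of_le_one_right (hu.1 j) (hl j).2
  set s := 2 / τ * (L i + θ * l i) - lam with hs
  have e3 : 2 / τ * (X - 1) ≤ s := by
    have : 2 / τ * (X - 1) ≤ 2 / τ * (X + θ * (l i - ∑ j, u j * l j)) := by
      apply mul_le_mul_of_nonneg_left _ (by positivity)
      have := (hl i).1
      nlinarith
    rw [hs]
    refine this.trans ?_
    have e : 2 / τ * (X + θ * (l i - ∑ j, u j * l j)) = 2 / τ * (L i + θ * l i) -
      2 / τ * (∑ j, u j * L j + θ * ∑ j, u j * l j) := by rw [hX]; ring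
    rw [e]; linarith
  have e4 : 2 * β * (X - 1) ≤ β * τ * s := by
    have := mul_le_mul_of_nonneg_left e3 (show 0 ≤ β * τ by positivity)
    have e : β * τ * (2 / τ * (X - 1)) = 2 * β * (X - 1) := by field_simp
    linarith
  nlinarith [sq_nonneg (s / 2 - β * τ)]

lemma exists_mix {N : ℕ} (D : Set (Measure (Fin N → ℝ))) (hD : D.Nonempty)
    (hDprob : ∀ lam ∈ D, IsProbabilityMeasure lam ∧ ∀ᵐ v ∂lam, ∀ i, v i ∈ Set.Icc (0 : ℝ) 1)
    (hDconv : ∀ lam₁ ∈ D, ∀ lam₂ ∈ D, ∀ a : ENNReal, a ≤ 1 →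
      a • lam₁ + (1 - a) • lam₂ ∈ D) (i : Fin N) :
    ∃ u ∈ stdSimplex ℝ (Fin N), ∀ lam ∈ D, gap D i ≤ ∫ v, (v i - ∑ j, u j * v j) ∂lam := by
  have : Nonempty (Fin N) := ⟨i⟩
  have hIntg : ∀ lam ∈ D, ∀ j, Integrable (fun v : Fin N → ℝ => v j) lam := by
    intro lam hl j
    obtain ⟨h1, h2⟩ := hDprob lam hl
    refine Integrable.of_bound (C := 1) (measurable_pi_apply j).aestronglyMeasurable ?_
    filter_upwards [h2] with v hv
    rw [Real.norm_eq_abs, abs_of_nonneg (hv j).1]; exact (hv j).2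
  have hint2 : ∀ lam ∈ D, ∀ j, Integrable (fun v : Fin N → ℝ => v i - v j) lam :=
    fun lam hl j => (hIntg lam hl i).sub (hIntg lam hl j)
  have hge : ∀ lam ∈ D, gap D i ≤ sSup (Set.range fun j : Fin N => ∫ v, (v i - v j) ∂lam) := by
    intro lam hl
    apply csInf_le
    · refine ⟨0, ?_⟩
      rintro _ ⟨lam, hl, rfl⟩
      refine le_csSup_of_le (Set.finite_range _).bddAbove ⟨i, rfl⟩ ?_
      simp
    · exact ⟨lam, hl, rfl⟩
  set g := gap D i with hg
  set O : Set (Fin N → ℝ) := {x | ∀ j, x j < g} with hO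
  set K : Set (Fin N → ℝ) := (fun lam => fun j => ∫ v, (v i - v j) ∂lam) '' D with hK
  have hOo : IsOpen O := by
    rw [hO, Set.setOf_forall]
    exact isOpen_iInter_of_finite fun j => isOpen_lt (continuous_apply j) continuous_const
  have hOc : Convex ℝ O := by
    rw [hO, Set.setOf_forall]
    exact convex_iInter fun j => convex_halfSpace_lt (LinearMap.proj j : (Fin N → ℝ) →ₗ[ℝ] ℝ).isLinear g
  have hKc : Convex ℝ K := by
    rintro _ ⟨l1, hl1, rfl⟩ _ ⟨l2, hl2, rfl⟩ a b ha hb hab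
    refine ⟨ENNReal.ofReal a • l1 + (1 - ENNReal.ofReal a) • l2, hDconv l1 hl1 l2 hl2 _ ?_, ?_⟩
    · rw [ENNReal.ofReal_le_one]; linarith
    · ext j
      have e : (1 - ENNReal.ofReal a) = ENNReal.ofReal b := by
        rw [← ENNReal.ofReal_one, ← ENNReal.ofReal_sub _ ha]; congr 1; linarith
      simp only [e]
      rw [integral_add_measure ((hint2 l1 hl1 j).smul_measure (by simp))
        ((hint2 l2 hl2 j).smul_measure (by simp)), integral_smul_measure, integral_smul_measure]
      simp [ENNReal.toReal_ofReal, ha, hb]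
  have hdis : Disjoint O K := by
    rw [Set.disjoint_left]
    rintro _ hx ⟨lam, hl, rfl⟩
    have := hge lam hl
    obtain ⟨j, hj⟩ := Set.Nonempty.csSup_mem (Set.range_nonempty (fun j : Fin N => ∫ v, (v i - v j) ∂lam)) (Set.finite_range _)
    rw [← hj] at this
    exact absurd (hx j) (not_lt.2 this)
  obtain ⟨f, r, hf1, hf2⟩ := geometric_hahn_banach_open hOc hOo hKc hdis
  set c : Fin N → ℝ := fun j => f (Pi.single j 1) with hc
  have hfx : ∀ x : Fin N → ℝ, f x = ∑ j, x j * c j := by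
    intro x
    conv_lhs => rw [pi_eq_sum_univ' x]
    simp only [map_sum, map_smul, smul_eq_mul]
    apply Finset.sum_congr rfl
    intro j _
    congr 2
  have hc0 : ∀ j, 0 ≤ c j := by
    intro j
    by_contra hneg
    push Not at hneg
    set x0 : Fin N → ℝ := fun _ => g - 1
    set M := (|r - f x0| + 1) / (- c j) with hM
    have hMp : 0 ≤ M := div_nonneg (by positivity) (by linarith)
    have := hf1 (x0 - M • Pi.single j 1) (by
      intro k
      simp only [x0, Pi.sub_apply, Pi.smul_apply, smul_eq_mul]
      have : 0 ≤ (Pi.single j (1:ℝ) : Fin N → ℝ) k := by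
        by_cases h : k = j
        · subst h; simp
        · simp [Pi.single_eq_of_ne h]
      nlinarith [mul_nonneg hMp this])
    rw [map_sub, map_smul, smul_eq_mul] at this
    change f x0 - M * c j < r at this
    have e : M * c j = -(|r - f x0| + 1) := by
      rw [hM, div_mul_eq_mul_div, div_eq_iff (by linarith)]; ring
    rw [e] at this
    linarith [le_abs_self (r - f x0)]
  have hcsum : 0 < ∑ j, c j := by
    rcases (Finset.sum_nonneg fun j (_ : j ∈ Finset.univ) => hc0 j).eq_or_lt with h | h
    · exfalso
      have hz : ∀ j, c j = 0 := fun j =>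
        (Finset.sum_eq_zero_iff_of_nonneg (fun j _ => hc0 j)).1 h.symm j (Finset.mem_univ j)
      obtain ⟨lam, hl⟩ := hD
      have a1 := hf1 (fun _ => g - 1) (fun j => by linarith)
      have a2 := hf2 _ ⟨lam, hl, rfl⟩
      rw [hfx] at a1 a2
      simp only [hz, mul_zero, Finset.sum_const_zero] at a1 a2
      linarith
    · exact h
  have hr : g * ∑ j, c j ≤ r := by
    apply le_of_forall_pos_lt_add
    intro ε hε
    have := hf1 (fun _ => g - ε / ∑ j, c j) (fun j => by
      have : 0 < ε / ∑ j, c j := by positivity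
      linarith)
    rw [hfx, ← Finset.mul_sum, sub_mul, div_mul_cancel₀ _ hcsum.ne'] at this
    linarith
  refine ⟨fun j => c j / ∑ k, c k, ⟨fun j => div_nonneg (hc0 j) hcsum.le, ?_⟩, ?_⟩
  · rw [← Finset.sum_div, div_self hcsum.ne']
  · intro lam hl
    have h1 := hr.trans (hf2 _ ⟨lam, hl, rfl⟩)
    rw [hfx] at h1
    rw [← le_div_iff₀ hcsum] at h1
    refine h1.trans (le_of_eq ?_)
    have := (hDprob lam hl).1
    rw [integral_sub (hIntg lam hl i) (integrable_finset_sum _ fun j _ => (hIntg lam hl j).const_mul _),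
      integral_finset_sum _ (fun j _ => (hIntg lam hl j).const_mul _)]
    simp only [integral_const_mul]
    have : ∀ j, ∫ v, (v i - v j) ∂lam = ∫ v, v i ∂lam - ∫ v, v j ∂lam := fun j =>
      integral_sub (hIntg lam hl i) (hIntg lam hl j)
    simp only [this, sub_mul, Finset.sum_sub_distrib, ← Finset.mul_sum]
    rw [sub_div, mul_div_cancel_right₀ _ hcsum.ne', Finset.sum_div]
    congr 1
    apply Finset.sum_congr rfl; intro j _; ring

lemma sum_Icc_fin (F : ℕ → ℝ) (n : ℕ) : ∑ s ∈ Finset.Icc 1 n, F s = ∑ s : Fin n, F ((s:ℕ) + 1) := by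
  induction n with
  | zero => simp
  | succ n ih => rw [Finset.sum_Icc_succ_top (by omega), Fin.sum_univ_castSucc, ih]; simp

lemma mgf_bound {Ω : Type*} [MeasurableSpace Ω] (μ : Measure Ω) [IsProbabilityMeasure μ]
    (N : ℕ) (D : Set (Measure (Fin N → ℝ)))
    (ℓ : ℕ → Ω → Fin N → ℝ) (hsa : IsSemiAdv μ D ℓ)
    (φ : (Fin N → ℝ) → ℝ) (hφm : Measurable φ)
    (hφ : ∀ v : Fin N → ℝ, (∀ i, v i ∈ Set.Icc (0:ℝ) 1) → |φ v| ≤ 1)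
    (δ : ℝ) (hδ : ∀ lam ∈ D, δ ≤ ∫ v, φ v ∂lam) (a : ℝ) (ha0 : 0 ≤ a) (ha1 : a ≤ 1) (n : ℕ) :
    Integrable (fun ω => Real.exp (-a * ∑ s ∈ Finset.Icc 1 n, φ (ℓ s ω))) μ ∧
    ∫ ω, Real.exp (-a * ∑ s ∈ Finset.Icc 1 n, φ (ℓ s ω)) ∂μ ≤ Real.exp (n * (a ^ 2 - a * δ)) := by
  obtain ⟨hm, hb, hcd⟩ := hsa
  have hφb : ∀ t ω, |φ (ℓ t ω)| ≤ 1 := fun t ω => hφ _ (hb t ω)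
  have hφl : ∀ t, Measurable fun ω => φ (ℓ t ω) := fun t => hφm.comp (hm t)
  have hXm : ∀ n, Measurable fun ω => Real.exp (-a * ∑ s ∈ Finset.Icc 1 n, φ (ℓ s ω)) := by
    intro n
    exact Real.measurable_exp.comp ((Finset.measurable_sum _ fun s _ => hφl s).const_mul (-a))
  have hXb : ∀ n : ℕ, ∀ ω, Real.exp (-a * ∑ s ∈ Finset.Icc 1 n, φ (ℓ s ω)) ≤ Real.exp (a * n) := by
    intro n ω
    apply Real.exp_le_exp.2
    have : -(n:ℝ) ≤ ∑ s ∈ Finset.Icc 1 n, φ (ℓ s ω) := by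
      have := Finset.sum_le_sum (s := Finset.Icc 1 n) (f := fun _ => (-1:ℝ)) (g := fun s => φ (ℓ s ω))
        (fun s _ => (abs_le.1 (hφb s ω)).1)
      simpa using this
    nlinarith
  have hXi : ∀ n, Integrable (fun ω => Real.exp (-a * ∑ s ∈ Finset.Icc 1 n, φ (ℓ s ω))) μ := by
    intro n
    refine Integrable.of_bound (C := Real.exp (a * n)) (hXm n).aestronglyMeasurable ?_
    refine Filter.Eventually.of_forall fun ω => ?_
    rw [Real.norm_eq_abs, abs_of_pos (Real.exp_pos _)]
    exact hXb n ω
  refine ⟨hXi n, ?_⟩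
  induction n with
  | zero => simp
  | succ n ih =>
    set Z : Ω → ℝ := fun ω => Real.exp (-a * ∑ s ∈ Finset.Icc 1 n, φ (ℓ s ω)) with hZ
    have hZi : Integrable Z μ := hXi n
    have hZφ : Integrable (fun ω => Z ω * φ (ℓ (n+1) ω)) μ := by
      refine hZi.mul_bdd (c := 1) (hφl (n+1)).aestronglyMeasurable ?_
      exact Filter.Eventually.of_forall fun ω => hφb (n+1) ω
    have hstep : δ * ∫ ω, Z ω ∂μ ≤ ∫ ω, Z ω * φ (ℓ (n+1) ω) ∂μ := by
      set X : Ω → (Fin n → Fin N → ℝ) := fun ω' (s : Fin n) => ℓ ((s : ℕ) + 1) ω' with hX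
      have hXmeas : Measurable X := measurable_pi_lambda _ fun s => hm _
      set ζ : (Fin n → Fin N → ℝ) → ℝ := fun x => Real.exp (-a * ∑ s, φ (x s)) with hζ
      have hζm : Measurable ζ := Real.measurable_exp.comp
        ((Finset.measurable_sum _ fun s _ => hφm.comp (measurable_pi_apply s)).const_mul (-a))
      have hZζ : ∀ ω, Z ω = ζ (X ω) := by
        intro ω
        simp only [hZ, hζ, hX]
        rw [sum_Icc_fin (fun s => φ (ℓ s ω))]
      have hfm : Measurable (fun p : (Fin n → Fin N → ℝ) × (Fin N → ℝ) => ζ p.1 * φ p.2) :=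
        (hζm.comp measurable_fst).mul (hφm.comp measurable_snd)
      have hce := condExp_prod_ae_eq_integral_condDistrib (μ := μ) (Y := ℓ (n+1)) hXmeas (hm (n+1)).aemeasurable
        hfm.stronglyMeasurable (by simpa only [hZζ] using hZφ)
      have e1 : ∫ ω, Z ω * φ (ℓ (n+1) ω) ∂μ =
          ∫ ω, ∫ y, ζ (X ω) * φ y ∂(condDistrib (ℓ (n+1)) X μ (X ω)) ∂μ := by
        rw [← integral_congr_ae hce, integral_condExp hXmeas.comap_le]
        simp only [hZζ]
      have hIntg : Integrable (fun ω => ∫ y, ζ (X ω) * φ y ∂(condDistrib (ℓ (n+1)) X μ (X ω))) μ :=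
        (integrable_congr hce).1 integrable_condExp
      rw [e1, ← integral_const_mul]
      apply integral_mono_ae (hZi.const_mul δ) hIntg
      filter_upwards [hcd n] with ω hω
      rw [integral_const_mul, hZζ, mul_comm]
      exact mul_le_mul_of_nonneg_left (hδ _ hω) (Real.exp_pos _).le
    have hpt : ∀ ω, Real.exp (-a * ∑ s ∈ Finset.Icc 1 (n+1), φ (ℓ s ω)) ≤
        (1 + a ^ 2) * Z ω - a * (Z ω * φ (ℓ (n+1) ω)) := by
      intro ω
      rw [Finset.sum_Icc_succ_top (by omega), mul_add, Real.exp_add]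
      have hx : |(-a) * φ (ℓ (n+1) ω)| ≤ 1 := by
        rw [abs_mul, abs_neg, abs_of_nonneg ha0]
        exact mul_le_one₀ ha1 (abs_nonneg _) (hφb _ _)
      have h1 := (abs_le.1 (Real.abs_exp_sub_one_sub_id_le hx)).2
      have h2 : φ (ℓ (n+1) ω) ^ 2 ≤ 1 := (sq_le_one_iff_abs_le_one _).2 (hφb _ _)
      have h3 : Real.exp (-a * φ (ℓ (n+1) ω)) ≤ 1 + a ^ 2 - a * φ (ℓ (n+1) ω) := by
        nlinarith [mul_le_mul_of_nonneg_left h2 (sq_nonneg a)]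
      have := mul_le_mul_of_nonneg_left h3 (Real.exp_pos (-a * ∑ s ∈ Finset.Icc 1 n, φ (ℓ s ω))).le
      simp only [hZ]
      linarith
    have hI : ∫ ω, Real.exp (-a * ∑ s ∈ Finset.Icc 1 (n+1), φ (ℓ s ω)) ∂μ ≤
        ∫ ω, ((1 + a ^ 2) * Z ω - a * (Z ω * φ (ℓ (n+1) ω))) ∂μ :=
      integral_mono (hXi (n+1)) ((hZi.const_mul (1 + a^2)).sub (hZφ.const_mul a)) hpt
    rw [integral_sub (hZi.const_mul (1 + a^2)) (hZφ.const_mul a), integral_const_mul,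
      integral_const_mul] at hI
    have hZ0 : 0 ≤ ∫ ω, Z ω ∂μ := integral_nonneg fun ω => (Real.exp_pos _).le
    have h4 : (1 + a ^ 2) * ∫ ω, Z ω ∂μ - a * ∫ ω, Z ω * φ (ℓ (n+1) ω) ∂μ ≤
        (a ^ 2 - a * δ + 1) * ∫ ω, Z ω ∂μ := by
      nlinarith [mul_le_mul_of_nonneg_left hstep ha0]
    have h5 := mul_le_mul_of_nonneg_right (Real.add_one_le_exp (a ^ 2 - a * δ)) hZ0
    have h6 := mul_le_mul_of_nonneg_left ih (Real.exp_pos (a ^ 2 - a * δ)).le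
    rw [← Real.exp_add] at h6
    have e3 : a ^ 2 - a * δ + n * (a ^ 2 - a * δ) = ((n + 1 : ℕ):ℝ) * (a ^ 2 - a * δ) := by
      push_cast; ring
    rw [e3] at h6
    linarith

lemma sum_sqrt (T : ℕ) : ∑ t ∈ Finset.Icc 1 T, (Real.sqrt t - Real.sqrt ((t:ℝ) - 1)) = Real.sqrt T := by
  induction T with
  | zero => simp
  | succ n ih => rw [Finset.sum_Icc_succ_top (by omega), ih]; push_cast; simp

lemma sum_sqrt_le (T : ℕ) (t0 : ℝ) :
    ∑ t ∈ Finset.Icc 1 T, (if (t:ℝ) ≤ t0 then (Real.sqrt t - Real.sqrt ((t:ℝ) - 1)) else 0) ≤ Real.sqrt t0 := by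
  have : ∑ t ∈ Finset.Icc 1 T, (if (t:ℝ) ≤ t0 then (Real.sqrt t - Real.sqrt ((t:ℝ) - 1)) else 0) ≤ Real.sqrt T ∧
    ∑ t ∈ Finset.Icc 1 T, (if (t:ℝ) ≤ t0 then (Real.sqrt t - Real.sqrt ((t:ℝ) - 1)) else 0) ≤ Real.sqrt t0 := by
    induction T with
    | zero => simp
    | succ n ih =>
      rw [Finset.sum_Icc_succ_top (by omega)]
      have hmono : Real.sqrt n ≤ Real.sqrt ((n + 1 : ℕ):ℝ) := Real.sqrt_le_sqrt (by push_cast; linarith)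
      split_ifs with h
      · have e : (((n + 1 : ℕ):ℝ) - 1) = n := by push_cast; ring
        rw [e]
        have := Real.sqrt_le_sqrt h
        constructor <;> linarith [ih.1]
      · constructor <;> linarith [ih.1, ih.2]
  exact this.2

lemma sum_exp_le (T : ℕ) (x : ℝ) (hx : 0 < x) :
    ∑ t ∈ Finset.Icc 1 T, Real.exp (-x * t) ≤ 1 / x := by
  have : ∑ t ∈ Finset.Icc 1 T, Real.exp (-x * t) ≤ (1 - Real.exp (-x * T)) / x := by
    induction T with
    | zero => simp
    | succ n ih =>
      rw [Finset.sum_Icc_succ_top (by omega)]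
      rw [le_div_iff₀ hx] at ih ⊢
      have h := mul_le_mul_of_nonneg_left (Real.add_one_le_exp x) (Real.exp_pos (-x * (n + 1 : ℕ))).le
      rw [← Real.exp_add] at h
      have e : -x * (n + 1 : ℕ) + x = -x * n := by push_cast; ring
      rw [e] at h
      nlinarith
  refine this.trans ?_
  gcongr
  linarith [Real.exp_pos (-x * T)]

lemma gap_nonneg {N : ℕ} (D : Set (Measure (Fin N → ℝ))) (i : Fin N) : 0 ≤ gap D i := by
  apply Real.sInf_nonneg
  rintro _ ⟨lam, hl, rfl⟩
  refine le_csSup_of_le (Set.finite_range _).bddAbove ⟨i, rfl⟩ ?_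
  simp

lemma gap0_le {N : ℕ} (D : Set (Measure (Fin N → ℝ))) (i : Fin N) (hi : gap D i ≠ 0) :
    gap0 D ≤ gap D i :=
  csInf_le ⟨0, by rintro _ ⟨j, hj, rfl⟩; exact gap_nonneg D j⟩
    ⟨i, lt_of_le_of_ne (gap_nonneg D i) (Ne.symm hi), rfl⟩

lemma gap0_pos {N : ℕ} (D : Set (Measure (Fin N → ℝ))) (h : ∃ i, 0 < gap D i) : 0 < gap0 D := by
  obtain ⟨i, hi⟩ := h
  obtain ⟨j, hj, e⟩ := Set.Nonempty.csInf_mem (s := gap D '' {i : Fin N | 0 < gap D i})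
    ⟨_, i, hi, rfl⟩ (Set.toFinite _)
  unfold gap0
  rw [← e]; exact hj

lemma mix_bound {N : ℕ} (u : Fin N → ℝ) (hu : u ∈ stdSimplex ℝ (Fin N)) (i : Fin N)
    (v : Fin N → ℝ) (hv : ∀ i, v i ∈ Set.Icc (0:ℝ) 1) : |v i - ∑ j, u j * v j| ≤ 1 := by
  have e2 : ∑ j, u j * v j ≤ 1 := by
    rw [← hu.2]
    exact Finset.sum_le_sum fun j _ => mul_le_of_le_one_right (hu.1 j) (hv j).2
  have e1 : 0 ≤ ∑ j, u j * v j := Finset.sum_nonneg fun j _ => mul_nonneg (hu.1 j) (hv j).1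
  rw [abs_le]
  constructor <;> linarith [(hv i).1, (hv i).2]

lemma gap0_le_one {N : ℕ} (D : Set (Measure (Fin N → ℝ))) (hD : D.Nonempty)
    (hDprob : ∀ lam ∈ D, IsProbabilityMeasure lam ∧ ∀ᵐ v ∂lam, ∀ i, v i ∈ Set.Icc (0 : ℝ) 1)
    (hDconv : ∀ lam₁ ∈ D, ∀ lam₂ ∈ D, ∀ a : ENNReal, a ≤ 1 →
      a • lam₁ + (1 - a) • lam₂ ∈ D) (h : ∃ i, 0 < gap D i) : gap0 D ≤ 1 := by
  obtain ⟨i, hi⟩ := h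
  refine (gap0_le D i hi.ne').trans ?_
  obtain ⟨u, hu, hD2⟩ := exists_mix D hD hDprob hDconv i
  obtain ⟨lam, hl⟩ := hD
  refine (hD2 lam hl).trans ((le_abs_self _).trans ?_)
  obtain ⟨hp, hb⟩ := hDprob lam hl
  have := norm_integral_le_of_norm_le_const (μ := lam) (f := fun v : Fin N → ℝ => v i - ∑ j, u j * v j) (C := 1)
    (by filter_upwards [hb] with v hv using mix_bound u hu i v hv)
  simpa using this

/-- numerical tail bound -/
lemma tail_num (N : ℕ) (hN : 2 ≤ N) (d t : ℝ) (hd : 0 < d) (hd1 : d ≤ 1)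
    (ht : 50 * Real.log N / d ^ 2 < t) :
    (N:ℝ) * (Real.exp ((t - 1) * ((2 * (d / 5)) ^ 2 - 2 * (d / 5) * d)) *
      Real.exp (2 * (d / 5) + (d / 5) ^ 2 * t)) ≤ Real.exp (-(d ^ 2 / 10) * t) := by
  have hN' : (0:ℝ) < N := by positivity
  have hlog2 : Real.log 2 ≤ Real.log N := Real.log_le_log (by norm_num) (by exact_mod_cast hN)
  have := Real.log_two_gt_d9
  rw [div_lt_iff₀ (by positivity)] at ht
  conv_lhs => rw [← Real.exp_log hN']
  rw [← Real.exp_add, ← Real.exp_add]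
  apply Real.exp_le_exp.2
  nlinarith

lemma sqrt_diff (t : ℝ) (ht : 1 ≤ t) : Real.sqrt t - Real.sqrt (t - 1) ≤ 1 / Real.sqrt t := by
  have h : 0 < Real.sqrt t := Real.sqrt_pos.2 (by linarith)
  rw [le_div_iff₀ h]
  have h1 := Real.sq_sqrt (show 0 ≤ t by linarith)
  have h2 := Real.sq_sqrt (show 0 ≤ t - 1 by linarith)
  have h3 : Real.sqrt (t - 1) ≤ Real.sqrt t := Real.sqrt_le_sqrt (by linarith)
  nlinarith [Real.sqrt_nonneg (t - 1)]

/-- adaptive minimax bound for FTRL-CARL (`c = 2`) in the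
semi-adversarial paradigm: for any time-homogeneous convex constraint `D` with at least
one positive gap, for every `T > 8·(log N₀)/Δ₀²`,
`E[max_i (Σ_{t=1}^T ⟨ℓ_t, w_t⟩ − Σ_{t=1}^T ℓ_t(i))] ≤ √(2·T·log N₀) + 25·(log N)/Δ₀`. -/
theorem stmt5 {Ω : Type*} [MeasurableSpace Ω] (μ : Measure Ω) [IsProbabilityMeasure μ]
    (N : ℕ) (hN : 2 ≤ N)
    (D : Set (Measure (Fin N → ℝ))) (hD : D.Nonempty)
    (hDprob : ∀ lam ∈ D, IsProbabilityMeasure lam ∧ ∀ᵐ v ∂lam, ∀ i, v i ∈ Set.Icc (0 : ℝ) 1)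
    (hDconv : ∀ lam₁ ∈ D, ∀ lam₂ ∈ D, ∀ a : ENNReal, a ≤ 1 →
      a • lam₁ + (1 - a) • lam₂ ∈ D)
    (hgap : ∃ i, 0 < gap D i)
    (ℓ : ℕ → Ω → Fin N → ℝ) (hsa : IsSemiAdv μ D ℓ)
    (w : ℕ → Ω → Fin N → ℝ) (hwmeas : ∀ t, Measurable (w t))
    (hwadapt : ∀ t (ω ω' : Ω), (∀ s, 1 ≤ s → s ≤ t → ℓ s ω = ℓ s ω') →
      w (t + 1) ω = w (t + 1) ω')
    (hcarl : ∀ ω, IsCarl N 2 (fun t => ℓ t ω) (fun t => w t ω))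
    (T : ℕ) (hT : 8 * Real.log (numEff D) / gap0 D ^ 2 < (T : ℝ)) :
    ∫ ω, sSup (Set.range fun i : Fin N =>
        ∑ t ∈ Finset.Icc 1 T, ((∑ j, ℓ t ω j * w t ω j) - ℓ t ω i)) ∂μ ≤
      Real.sqrt (2 * (T : ℝ) * Real.log (numEff D)) + 25 * Real.log N / gap0 D := by
  classical
  have hd := gap0_pos D hgap
  have hd1 := gap0_le_one D hD hDprob hDconv hgap
  have hgl := gap0_le D
  set I : Finset (Fin N) := Finset.univ.filter (fun i => gap D i = 0) with hI
  have hcard : numEff D = I.card := by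
    rw [numEff, ← Set.ncard_coe_finset]
    congr 1
    ext i
    simp [hI]
  rw [hcard]
  set d := gap0 D with hdd
  have hlog2 : Real.log 2 ≤ Real.log N := Real.log_le_log (by norm_num) (by exact_mod_cast hN)
  have hl2 := Real.log_two_gt_d9
  have hlogN : 0 < Real.log N := by linarith
  have hlogI : 0 ≤ Real.log (I.card) := Real.log_natCast_nonneg _
  choose u hu hu2 using fun i => exists_mix D hD hDprob hDconv i
  set φ : Fin N → (Fin N → ℝ) → ℝ := fun i v => v i - ∑ j, u i j * v j with hφ
  have hφm : ∀ i, Measurable (φ i) := by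
    intro i
    exact (measurable_pi_apply i).sub
      (Finset.measurable_sum _ fun j _ => (measurable_pi_apply j).const_mul _)
  set β := d / 5 with hβ
  have hβ0 : 0 ≤ β := by positivity
  set t0 := 50 * Real.log N / d ^ 2 with ht0
  set b : ℕ → Ω → ℝ := fun t ω =>
    ∑ i ∈ Iᶜ, Real.exp (-(2 * β) * ∑ s ∈ Finset.Icc 1 (t - 1), φ i (ℓ s ω)) *
      Real.exp (2 * β + β ^ 2 * t) with hb
  set ρ : ℕ → Ω → ℝ := fun t ω =>
    if (t:ℝ) ≤ t0 then Real.sqrt (2 * Real.log N)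
    else Real.sqrt (2 * Real.log (I.card)) + 3 * b t ω with hρ
  have hb0 : ∀ t ω, 0 ≤ b t ω := fun t ω => Finset.sum_nonneg fun i _ => by positivity
  have hρ0 : ∀ t ω, 0 ≤ ρ t ω := by
    intro t ω
    simp only [hρ]
    split_ifs
    · positivity
    · have := hb0 t ω
      positivity
  obtain ⟨hm, hbd, hcd⟩ := id hsa
  have hpath : ∀ ω, sSup (Set.range fun i : Fin N =>
        ∑ t ∈ Finset.Icc 1 T, ((∑ j, ℓ t ω j * w t ω j) - ℓ t ω i)) ≤
      ∑ t ∈ Finset.Icc 1 T, (Real.sqrt t - Real.sqrt ((t:ℝ) - 1)) * ρ t ω := by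
    intro ω
    have hP := pathwise (by omega : 1 ≤ N) (fun t => ℓ t ω) (fun t => w t ω) (fun t i => hbd t ω i)
      (hcarl ω) (fun t => ρ t ω) (fun t => hρ0 t ω) (by
        intro k θ lam h0 h1 hlam hsum
        simp only [hρ]
        split_ifs with hk
        · exact R_le_logN _ (fun i => sub_nonneg.2 (hlam i)) hsum
        · refine (R_le_I _ (fun i => sub_nonneg.2 (hlam i)) hsum I).trans ?_
          have : ∀ i, Real.exp (-(2 / Real.sqrt ((k:ℝ) + 1) * ((∑ s ∈ Finset.Icc 1 k, ℓ s ω i) +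
              θ * ℓ (k+1) ω i) - lam) ^ 2 / 4) ≤
              Real.exp (-(2 * β) * ∑ s ∈ Finset.Icc 1 (k + 1 - 1), φ i (ℓ s ω)) *
                Real.exp (2 * β + β ^ 2 * ((k + 1 : ℕ):ℝ)) := by
            intro i
            have c := coord_bound (fun i => ∑ s ∈ Finset.Icc 1 k, ℓ s ω i) (ℓ (k+1) ω) (hbd (k+1) ω)
              (Real.sqrt ((k:ℝ) + 1)) β θ lam (Real.sqrt_pos.2 (by positivity)) hβ0 h0 h1 hlam (u i) (hu i) i
            rw [Real.sq_sqrt (by positivity)] at c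
            have e : ∑ s ∈ Finset.Icc 1 (k + 1 - 1), φ i (ℓ s ω) =
                ∑ s ∈ Finset.Icc 1 k, ℓ s ω i - ∑ j, u i j * ∑ s ∈ Finset.Icc 1 k, ℓ s ω j := by
              simp only [hφ, Nat.add_sub_cancel, Finset.sum_sub_distrib, Finset.mul_sum]
              rw [Finset.sum_comm]
            rw [e]
            push_cast
            exact c
          have := Finset.sum_le_sum (s := Iᶜ) fun i _ => this i
          simp only [hb]
          linarith) T
    have : Nonempty (Fin N) := ⟨⟨0, by omega⟩⟩
    apply csSup_le (Set.range_nonempty _)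
    rintro _ ⟨i, rfl⟩
    have hPi := hP (Pi.single i 1) (single_mem_stdSimplex ℝ i)
    rw [HB_single] at hPi
    have e : ∑ k, (∑ s ∈ Finset.Icc 1 T, ℓ s ω k) * (Pi.single i (1:ℝ) : Fin N → ℝ) k =
        ∑ s ∈ Finset.Icc 1 T, ℓ s ω i := by
      rw [Finset.sum_eq_single i]
      · simp
      · intro k _ hk; rw [Pi.single_eq_of_ne hk]; simp
      · simp
    rw [e] at hPi
    simp only [Finset.sum_sub_distrib]
    linarith
  have hmgf : ∀ i ∈ Iᶜ, ∀ n : ℕ, _ := fun i (hi : i ∈ Iᶜ) (n : ℕ) =>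
    mgf_bound μ N D ℓ hsa (φ i) (hφm i) (mix_bound (u i) (hu i) i) d
      (fun lam hl => (hgl i (by simpa [hI] using hi)).trans (hu2 i lam hl)) (2 * β)
      (by positivity) (by rw [hβ]; linarith) n
  have hbint : ∀ t, Integrable (b t) μ := fun t =>
    integrable_finsetSum _ fun i hi => ((hmgf i hi (t - 1)).1).mul_const _
  have hbexp : ∀ t : ℕ, 1 ≤ t → t0 < t → ∫ ω, b t ω ∂μ ≤ Real.exp (-(d ^ 2 / 10) * t) := by
    intro t h1 ht
    simp only [hb]
    rw [integral_finsetSum _ fun i hi => ((hmgf i hi (t - 1)).1).mul_const _]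
    simp only [integral_mul_const]
    have h2 : ∀ i ∈ Iᶜ, (∫ ω, Real.exp (-(2 * β) * ∑ s ∈ Finset.Icc 1 (t - 1), φ i (ℓ s ω)) ∂μ) *
        Real.exp (2 * β + β ^ 2 * t) ≤
        Real.exp (((t:ℝ) - 1) * ((2 * β) ^ 2 - 2 * β * d)) * Real.exp (2 * β + β ^ 2 * t) := by
      intro i hi
      have := (hmgf i hi (t - 1)).2
      rw [Nat.cast_sub h1, Nat.cast_one] at this
      exact mul_le_mul_of_nonneg_right this (Real.exp_pos _).le
    refine (Finset.sum_le_sum h2).trans ?_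
    rw [Finset.sum_const, nsmul_eq_mul]
    refine le_trans ?_ (tail_num N hN d t hd hd1 ht)
    apply mul_le_mul_of_nonneg_right _ (by positivity)
    have := Finset.card_le_univ (Iᶜ)
    rw [Fintype.card_fin] at this
    exact_mod_cast this
  have hρint : ∀ t, Integrable (ρ t) μ := by
    intro t
    by_cases h : (t:ℝ) ≤ t0
    · simp only [hρ, h, if_true]; exact integrable_const _
    · simp only [hρ, h, if_false]; exact (integrable_const _).add ((hbint t).const_mul 3)
  have hterm : ∀ t ∈ Finset.Icc 1 T, (Real.sqrt t - Real.sqrt ((t:ℝ) - 1)) * ∫ ω, ρ t ω ∂μ ≤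
      (Real.sqrt t - Real.sqrt ((t:ℝ) - 1)) * Real.sqrt (2 * Real.log (I.card)) +
      (if (t:ℝ) ≤ t0 then (Real.sqrt t - Real.sqrt ((t:ℝ) - 1)) else 0) * Real.sqrt (2 * Real.log N) +
      (3 * d / 5) * Real.exp (-(d ^ 2 / 10) * t) := by
    intro t ht
    have h1 : 1 ≤ t := (Finset.mem_Icc.1 ht).1
    have h1' : (1:ℝ) ≤ t := by exact_mod_cast h1
    have hc0 : 0 ≤ Real.sqrt t - Real.sqrt ((t:ℝ) - 1) :=
      sub_nonneg.2 (Real.sqrt_le_sqrt (by linarith))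
    by_cases h : (t:ℝ) ≤ t0
    · simp only [hρ, h, if_true]
      simp only [integral_const, probReal_univ, smul_eq_mul, one_mul]
      have : 0 ≤ (Real.sqrt t - Real.sqrt ((t:ℝ) - 1)) * Real.sqrt (2 * Real.log (I.card)) := by positivity
      have : 0 ≤ (3 * d / 5) * Real.exp (-(d ^ 2 / 10) * t) := by positivity
      linarith
    · simp only [hρ, h, if_false]
      push Not at h
      rw [integral_add (integrable_const _) ((hbint t).const_mul 3), integral_const_mul]
      simp only [integral_const, probReal_univ, smul_eq_mul, one_mul]
      have hbe := hbexp t h1 h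
      have hc5 : Real.sqrt t - Real.sqrt ((t:ℝ) - 1) ≤ d / 5 := by
        refine (sqrt_diff t h1').trans ?_
        have h5 : 5 / d ≤ Real.sqrt t := by
          apply Real.le_sqrt_of_sq_le
          refine le_trans ?_ h.le
          rw [ht0, div_pow]
          gcongr
          linarith
        rw [div_le_iff₀ (by positivity)]
        rw [div_le_iff₀ hd] at h5
        linarith
      have hbn : 0 ≤ ∫ ω, b t ω ∂μ := integral_nonneg (hb0 t)
      have := mul_le_mul hc5 hbe hbn (by positivity)
      linarith
  have hmain : ∫ ω, ∑ t ∈ Finset.Icc 1 T, (Real.sqrt t - Real.sqrt ((t:ℝ) - 1)) * ρ t ω ∂μ ≤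
      Real.sqrt (2 * (T : ℝ) * Real.log (I.card)) + 25 * Real.log N / d := by
    rw [integral_finsetSum _ fun t _ => (hρint t).const_mul _]
    simp only [integral_const_mul]
    refine (Finset.sum_le_sum hterm).trans ?_
    rw [Finset.sum_add_distrib, Finset.sum_add_distrib, ← Finset.sum_mul, ← Finset.sum_mul,
      ← Finset.mul_sum, sum_sqrt]
    have a1 : Real.sqrt T * Real.sqrt (2 * Real.log (I.card)) = Real.sqrt (2 * (T : ℝ) * Real.log (I.card)) := by
      rw [← Real.sqrt_mul (by positivity)]; congr 1; ring
    have a2 := mul_le_mul_of_nonneg_right (sum_sqrt_le T t0) (Real.sqrt_nonneg (2 * Real.log N))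
    have a3 : Real.sqrt t0 * Real.sqrt (2 * Real.log N) = 10 * Real.log N / d := by
      rw [← Real.sqrt_mul (by positivity), ht0,
        show 50 * Real.log N / d ^ 2 * (2 * Real.log N) = (10 * Real.log N / d) ^ 2 by field_simp; ring,
        Real.sqrt_sq (by positivity)]
    have a4 := mul_le_mul_of_nonneg_left (sum_exp_le T (d ^ 2 / 10) (by positivity))
      (show 0 ≤ 3 * d / 5 by positivity)
    have a5 : 3 * d / 5 * (1 / (d ^ 2 / 10)) = 6 / d := by field_simp; norm_num
    have a6 : 6 / d ≤ 15 * Real.log N / d := by gcongr; linarith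
    have a7 : 25 * Real.log N / d = 10 * Real.log N / d + 15 * Real.log N / d := by ring
    linarith
  by_cases hS : Integrable (fun ω => sSup (Set.range fun i : Fin N =>
        ∑ t ∈ Finset.Icc 1 T, ((∑ j, ℓ t ω j * w t ω j) - ℓ t ω i))) μ
  · exact (integral_mono hS (integrable_finsetSum _ fun t _ => (hρint t).const_mul _) hpath).trans hmain
  · rw [integral_undef hS]; positivity
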